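/- arXiv:1402.2685 — 3 statements merged into one kernel-verified Lean document; each statement's English description precedes it below -/
import Mathlib

section
/- Let n ≥ 2 and let D be a compact convex body in Euclidean space ℝⁿ satisfying the R₁,R₂ ball-sandwich condition for some reals 0 < R₂ ≤ R₁. Then there exist a point o ∈ ℝⁿ and reals r, R with 0 < r ≤ R such that Metric.closedBall o r ⊆ D ⊆ Metric.closedBall o R and R / r ≤ (√(R₁/R₂) + √2) / (√(R₂/R₁) + √2). (In terms of the curvature bounds κ₁ = 1/R₁, κ₂ = 1/R₂, the right-hand side is (√(κ₂/κ₁) + √2)/(√(κ₁/κ₂) + √2).) -/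
/-!
Let `C` be the set of centres of balls of radius `R₂` contained in `D`, let `ρ` be its circumradius
and `o` its circumcentre. Every boundary point of `D` is within `R₂` of `C`, so
`D ⊆ closedBall o R` with `R = ρ + R₂`. A ball of radius `R₁` around `x₁` containing `D` satisfies
`C ⊆ closedBall x₁ (R₁ - R₂)`, and comparing the circumball of `C` with balls centred between `o`
and `x₁` gives `ρ ^ 2 + dist o x₁ ^ 2 ≤ (R₁ - R₂) ^ 2`. If this ball touches `D` at `q`, then
`dist q o ≥ R₁ - dist o x₁`, so `D` contains `closedBall o r` for the `r ≤ R₁` with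
`(R - R₂) ^ 2 + (R₁ - r) ^ 2 = (R₁ - R₂) ^ 2`; here `o ∈ C`, since `D`, and with it `C`, is convex
because every boundary point of `D` lies on the boundary of a ball containing `D`. The steeper of
the two tangents from the origin to this circle in the `(r, R)`-plane has the claimed bound on
`R / r` as its slope.

In a Hilbert space circumcentres exist because `y ↦ sup_{p ∈ C} dist p y ^ 2` is strongly convex.
-/

open Metric Set Filter Topology AffineMap

section Frontier

theorem inter_frontier_nonempty_of_isPreconnected {X : Type*} [TopologicalSpace X] {S D : Set X}
    (hS : IsPreconnected S) (hin : (S ∩ D).Nonempty) (hout : (S \ D).Nonempty) :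
    (S ∩ frontier D).Nonempty := by
  by_contra! hempty
  have hdisj : S ⊆ (frontier D)ᶜ := (disjoint_iff_inter_eq_empty.2 hempty).subset_compl_right
  rw [compl_frontier_eq_union_interior] at hdisj
  obtain ⟨x, hxS, hxD⟩ := hin
  obtain ⟨y, hyS, hyD⟩ := hout
  obtain ⟨z, -, hzD, hzD'⟩ := hS _ _ isOpen_interior isOpen_interior hdisj
    ⟨x, hxS, (hdisj hxS).resolve_right fun h => interior_subset h hxD⟩
    ⟨y, hyS, (hdisj hyS).resolve_left fun h => hyD (interior_subset h)⟩
  exact interior_subset hzD' (interior_subset hzD)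

theorem convex_of_forall_mem_frontier_exists_convex {E : Type*} [AddCommGroup E] [Module ℝ E]
    [TopologicalSpace E] [IsTopologicalAddGroup E] [ContinuousSMul ℝ E] {D : Set E}
    (hD : IsClosed D) (hint : (interior D).Nonempty)
    (hsupp : ∀ q ∈ frontier D, ∃ K, Convex ℝ K ∧ D ⊆ K ∧ q ∉ interior K) : Convex ℝ D := by
  rw [convex_iff_segment_subset]
  intro x hx y hy z hz
  by_contra hzD
  obtain ⟨w, hw⟩ := hint
  obtain ⟨q, hqseg, hq⟩ := inter_frontier_nonempty_of_isPreconnected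
    (convex_segment w z).isPreconnected ⟨w, left_mem_segment ℝ w z, interior_subset hw⟩
    ⟨z, right_mem_segment ℝ w z, hzD⟩
  obtain ⟨K, hK, hDK, hqK⟩ := hsupp q hq
  have hwq : w ≠ q := fun h => hq.2 (h ▸ hw)
  have hzq : z ≠ q := fun h => hzD (h ▸ hD.frontier_subset hq)
  have hzK : z ∈ K := hK.segment_subset (hDK hx) (hDK hy) hz
  exact hqK (hK.openSegment_interior_self_subset_interior (interior_mono hDK hw) hzK
    (mem_openSegment_of_ne_left_right hwq hzq hqseg))

variable {E : Type*} [NormedAddCommGroup E] [NormedSpace ℝ E]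

theorem subset_convexHull_frontier_of_isBounded [Nontrivial E] {D : Set E}
    (hD : Bornology.IsBounded D) : D ⊆ convexHull ℝ (frontier D) := by
  intro x hx
  obtain ⟨M, hM⟩ := (isBounded_iff_subset_closedBall x).1 hD
  have hM0 : 0 ≤ M := nonempty_closedBall.1 ⟨x, hM hx⟩
  obtain ⟨v, hv⟩ := exists_norm_eq E (c := M + 1) (by positivity)
  have exit {y : E} (hy : dist y x = M + 1) : ∃ q ∈ frontier D, Wbtw ℝ x q y := by
    obtain ⟨q, hq, hqD⟩ := inter_frontier_nonempty_of_isPreconnected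
      (convex_segment x y).isPreconnected ⟨x, left_mem_segment ℝ x y, hx⟩
      ⟨y, right_mem_segment ℝ x y, fun h => by linarith [mem_closedBall.1 (hM h)]⟩
    exact ⟨q, hqD, mem_segment_iff_wbtw.1 hq⟩
  obtain ⟨p, hp, hxp⟩ := exit (y := x - v) (by simp [hv])
  obtain ⟨q, hq, hxq⟩ := exit (y := x + v) (by simp [hv])
  have hx : Wbtw ℝ (x - v) x (x + v) := by
    simpa only [midpoint_sub_add] using wbtw_midpoint ℝ (x - v) (x + v)
  have hpq : Wbtw ℝ p x q := (hx.trans_left_right hxp.symm).trans_right_left hxq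
  exact segment_subset_convexHull hp hq (mem_segment_iff_wbtw.2 hpq)

theorem ball_subset_of_forall_frontier_le_dist {D : Set E} {o : E} {r : ℝ} (ho : o ∈ D)
    (h : ∀ q ∈ frontier D, r ≤ dist q o) : ball o r ⊆ D := by
  intro z hz
  by_contra hzD
  have hr : 0 < r := dist_nonneg.trans_lt (mem_ball.1 hz)
  obtain ⟨q, hqr, hq⟩ := inter_frontier_nonempty_of_isPreconnected
    (convex_ball o r).isPreconnected ⟨o, mem_ball_self hr, ho⟩ ⟨z, hz, hzD⟩
  exact (mem_ball.1 hqr).not_ge (h q hq)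

theorem dist_le_sub_of_closedBall_subset_closedBall [Nontrivial E] {x y : E} {a b : ℝ}
    (ha : 0 ≤ a) (h : closedBall x a ⊆ closedBall y b) : dist x y ≤ b - a := by
  obtain ⟨u, hu, hray⟩ : ∃ u : E, ‖u‖ = a ∧ SameRay ℝ (x - y) u := by
    rcases eq_or_ne x y with rfl | hxy
    · obtain ⟨u, hu⟩ := exists_norm_eq E ha
      exact ⟨u, hu, by simp⟩
    · have hxy' : ‖x - y‖ ≠ 0 := norm_ne_zero_iff.2 (sub_ne_zero.2 hxy)
      refine ⟨(a / ‖x - y‖) • (x - y), ?_, SameRay.sameRay_nonneg_smul_right _ (by positivity)⟩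
      rw [norm_smul, Real.norm_of_nonneg (by positivity), div_mul_cancel₀ _ hxy']
  have hmem : x + u ∈ closedBall y b := h (by simp [hu])
  rw [mem_closedBall, dist_eq_norm, add_sub_right_comm, hray.norm_add, hu] at hmem
  rw [dist_eq_norm]
  linarith

end Frontier

section InnerParallelBody

/-- The inner parallel body of `D` at distance `ε`: the centres of the closed balls of radius `ε`
contained in `D`. -/
def innerParallelBody {X : Type*} [PseudoMetricSpace X] (D : Set X) (ε : ℝ) : Set X :=
  {x | closedBall x ε ⊆ D}

variable {E : Type*} [NormedAddCommGroup E] {D : Set E} {ε : ℝ}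

theorem innerParallelBody_eq_iInter :
    innerParallelBody D ε = ⋂ u ∈ closedBall (0 : E) ε, (· + u) ⁻¹' D := by
  ext x
  simp only [innerParallelBody, mem_ofPred_eq, mem_iInter, mem_preimage]
  refine ⟨fun h u hu => h (by simpa using hu), fun h z hz => ?_⟩
  simpa using h (z - x) (by simpa [dist_eq_norm] using hz)

theorem innerParallelBody_subset (hε : 0 ≤ ε) : innerParallelBody D ε ⊆ D :=
  fun _ hx => hx (mem_closedBall_self hε)

theorem isClosed_innerParallelBody (hD : IsClosed D) : IsClosed (innerParallelBody D ε) := by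
  rw [innerParallelBody_eq_iInter]
  exact isClosed_biInter fun u _ => hD.preimage (continuous_add_const u)

theorem convex_innerParallelBody [NormedSpace ℝ E] (hD : Convex ℝ D) :
    Convex ℝ (innerParallelBody D ε) := by
  rw [innerParallelBody_eq_iInter]
  exact convex_iInter₂ fun u _ => hD.translate_preimage_left u

theorem innerParallelBody_subset_closedBall_sub [NormedSpace ℝ E] [Nontrivial E] {y : E} {b : ℝ}
    (hε : 0 ≤ ε) (hD : D ⊆ closedBall y b) : innerParallelBody D ε ⊆ closedBall y (b - ε) :=
  fun _ hx => dist_le_sub_of_closedBall_subset_closedBall hε (hx.trans hD)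

end InnerParallelBody

section Circumradius

/-- The circumradius of a set: the infimum of the radii of the closed balls containing it.
For the empty set and for unbounded sets it takes the junk value `0`. -/
noncomputable def circumradius {X : Type*} [PseudoMetricSpace X] (C : Set X) : ℝ :=
  sInf {s | ∃ y, C ⊆ closedBall y s}

section PseudoMetricSpace

variable {X : Type*} [PseudoMetricSpace X] {C : Set X}

theorem nonneg_of_subset_closedBall (hne : C.Nonempty) {y : X} {s : ℝ} (h : C ⊆ closedBall y s) :
    0 ≤ s :=
  nonempty_closedBall.1 (hne.mono h)

theorem circumradius_nonneg (hne : C.Nonempty) : 0 ≤ circumradius C :=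
  Real.sInf_nonneg fun _ ⟨_, h⟩ => nonneg_of_subset_closedBall hne h

theorem circumradius_le (hne : C.Nonempty) {y : X} {s : ℝ} (h : C ⊆ closedBall y s) :
    circumradius C ≤ s :=
  csInf_le ⟨0, fun _ ⟨_, h⟩ => nonneg_of_subset_closedBall hne h⟩ ⟨y, h⟩

theorem sq_circumradius_le (hne : C.Nonempty) {y : X} {a : ℝ} (h : ∀ p ∈ C, dist p y ^ 2 ≤ a) :
    circumradius C ^ 2 ≤ a := by
  obtain ⟨p, hp⟩ := hne
  have hle : circumradius C ≤ √a :=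
    circumradius_le ⟨p, hp⟩ fun q hq => Real.le_sqrt_of_sq_le (h q hq)
  exact (Real.le_sqrt (circumradius_nonneg ⟨p, hp⟩) ((sq_nonneg _).trans (h p hp))).1 hle

end PseudoMetricSpace

variable {E : Type*} [NormedAddCommGroup E] [InnerProductSpace ℝ E] {C : Set E} {x y o : E}

theorem dist_lineMap_sq (p x y : E) (t : ℝ) :
    dist p (lineMap x y t) ^ 2 =
      (1 - t) * dist p x ^ 2 + t * dist p y ^ 2 - t * (1 - t) * dist x y ^ 2 := by
  have hp : p - lineMap x y t = (1 - t) • (p - x) + t • (p - y) := by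
    rw [lineMap_apply_module]; module
  have hxy : x - y = (p - y) - (p - x) := by abel
  simp only [dist_eq_norm]
  rw [hp, hxy, norm_add_sq_real, norm_sub_sq_real (p - y), real_inner_comm (p - x) (p - y),
    norm_smul, norm_smul, mul_pow, mul_pow, Real.norm_eq_abs, Real.norm_eq_abs, sq_abs, sq_abs,
    real_inner_smul_left, real_inner_smul_right]
  ring

theorem sq_circumradius_le_lineMap (hne : C.Nonempty) {a b t : ℝ} (hx : C ⊆ closedBall x a)
    (hy : C ⊆ closedBall y b) (ht₀ : 0 ≤ t) (ht₁ : t ≤ 1) :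
    circumradius C ^ 2 ≤ (1 - t) * a ^ 2 + t * b ^ 2 - t * (1 - t) * dist x y ^ 2 := by
  refine sq_circumradius_le hne (y := lineMap x y t) fun p hp => ?_
  rw [dist_lineMap_sq]
  have : 0 ≤ 1 - t := sub_nonneg.2 ht₁
  have hpx : dist p x ≤ a := hx hp
  have hpy : dist p y ≤ b := hy hp
  gcongr

theorem dist_sq_le_of_subset_closedBall (hne : C.Nonempty) {s : ℝ} (hx : C ⊆ closedBall x s)
    (hy : C ⊆ closedBall y s) : dist x y ^ 2 ≤ 4 * (s ^ 2 - circumradius C ^ 2) := by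
  have := sq_circumradius_le_lineMap hne hx hy (t := 1 / 2) (by norm_num) (by norm_num)
  linarith

theorem exists_subset_closedBall_circumradius [CompleteSpace E] (hne : C.Nonempty)
    (hC : Bornology.IsBounded C) : ∃ o, C ⊆ closedBall o (circumradius C) := by
  set ρ := circumradius C
  have hradii : {s | ∃ y, C ⊆ closedBall y s}.Nonempty := by
    obtain ⟨p, -⟩ := hne
    obtain ⟨s, hs⟩ := (isBounded_iff_subset_closedBall p).1 hC
    exact ⟨s, p, hs⟩
  have happrox (k : ℕ) : ∃ y, C ⊆ closedBall y (ρ + 1 / (k + 1)) := by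
    obtain ⟨s, ⟨y, hy⟩, hs⟩ := exists_lt_of_csInf_lt hradii
      (show circumradius C < ρ + 1 / (k + 1) from lt_add_of_pos_right ρ (by positivity))
    exact ⟨y, hy.trans (closedBall_subset_closedBall hs.le)⟩
  choose y hy using happrox
  have hlim : Tendsto (fun k : ℕ => ρ + 1 / ((k : ℝ) + 1)) atTop (𝓝 ρ) := by
    simpa only [add_zero] using tendsto_one_div_add_atTop_nhds_zero_nat.const_add ρ
  have hcauchy : CauchySeq y := by
    refine cauchySeq_of_le_tendsto_0 (fun k : ℕ => √(4 * ((ρ + 1 / ((k : ℝ) + 1)) ^ 2 - ρ ^ 2)))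
      (fun n m k hn hm => Real.le_sqrt_of_sq_le ?_) ?_
    · exact dist_sq_le_of_subset_closedBall hne
        ((hy n).trans (closedBall_subset_closedBall (by gcongr)))
        ((hy m).trans (closedBall_subset_closedBall (by gcongr)))
    · rw [show (0 : ℝ) = √(4 * (ρ ^ 2 - ρ ^ 2)) by simp]
      exact (((hlim.pow 2).sub_const (ρ ^ 2)).const_mul 4).sqrt
  obtain ⟨o, ho⟩ := cauchySeq_tendsto_of_complete hcauchy
  exact ⟨o, fun p hp =>
    le_of_tendsto_of_tendsto' (tendsto_const_nhds.dist ho) hlim fun k => hy k hp⟩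

theorem sq_circumradius_add_sq_dist_le (hne : C.Nonempty)
    (ho : C ⊆ closedBall o (circumradius C)) {s : ℝ} (hy : C ⊆ closedBall y s) :
    circumradius C ^ 2 + dist o y ^ 2 ≤ s ^ 2 := by
  have hlim : Tendsto (fun t : ℝ => circumradius C ^ 2 + (1 - t) * dist o y ^ 2) (𝓝[>] 0)
      (𝓝 (circumradius C ^ 2 + (1 - 0) * dist o y ^ 2)) :=
    Continuous.continuousWithinAt (by fun_prop)
  rw [sub_zero, one_mul] at hlim
  refine le_of_tendsto hlim ?_
  filter_upwards [Ioo_mem_nhdsGT one_pos] with t ht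
  have := sq_circumradius_le_lineMap hne ho hy ht.1.le ht.2.le
  refine le_of_mul_le_mul_left ?_ ht.1
  linarith

theorem mem_of_subset_closedBall_circumradius [CompleteSpace E] (hne : C.Nonempty)
    (hclosed : IsClosed C) (hconv : Convex ℝ C) (ho : C ⊆ closedBall o (circumradius C)) :
    o ∈ C := by
  obtain ⟨v, hvC, hv⟩ := exists_norm_eq_iInf_of_complete_convex hne hclosed.isComplete hconv o
  rw [norm_eq_iInf_iff_real_inner_le_zero hconv hvC] at hv
  have hproj : circumradius C ^ 2 ≤ circumradius C ^ 2 - ‖o - v‖ ^ 2 := by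
    refine sq_circumradius_le hne (y := v) fun p hp => ?_
    have hpo : ‖o - p‖ ^ 2 ≤ circumradius C ^ 2 := by
      rw [← dist_eq_norm']
      exact pow_le_pow_left₀ dist_nonneg (ho hp) 2
    have hexpand := norm_sub_sq_real (o - v) (p - v)
    rw [sub_sub_sub_cancel_right] at hexpand
    rw [dist_eq_norm]
    linarith [hv p hp]
  have hov : ‖o - v‖ ^ 2 = 0 := le_antisymm (by linarith) (sq_nonneg _)
  rwa [sub_eq_zero.1 (norm_eq_zero.1 (sq_eq_zero_iff.1 hov))]

end Circumradius

section Ratio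

theorem sqrt_div_add_sqrt_two_div {a b : ℝ} (ha : 0 < a) (hb : 0 < b) :
    (√(a / b) + √2) / (√(b / a) + √2) = (a + √(2 * a * b)) / (b + √(2 * a * b)) := by
  rw [Real.sqrt_div ha.le, Real.sqrt_div hb.le, Real.sqrt_mul (by positivity),
    Real.sqrt_mul zero_le_two]
  have hx : 0 < √a := Real.sqrt_pos.2 ha
  have hy : 0 < √b := Real.sqrt_pos.2 hb
  have hx2 : √a ^ 2 = a := Real.sq_sqrt ha.le
  have hy2 : √b ^ 2 = b := Real.sq_sqrt hb.le
  generalize √a = x at *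
  generalize √b = y at *
  subst hx2 hy2
  field_simp

-- Cauchy–Schwarz against the normal `(b + m, a + m)` of the tangent line through the origin, whose
-- norm is `a + b + m` because `m ^ 2 = 2 * a * b`.
theorem mul_add_sqrt_le_of_sq_add_sq_le {a b r R : ℝ} (hb : 0 ≤ b) (hba : b ≤ a)
    (h : (R - b) ^ 2 + (a - r) ^ 2 ≤ (a - b) ^ 2) :
    R * (b + √(2 * a * b)) ≤ (a + √(2 * a * b)) * r := by
  have ha : 0 ≤ a := hb.trans hba
  have hm2 : √(2 * a * b) ^ 2 = 2 * a * b := Real.sq_sqrt (by positivity)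
  have hm : 0 ≤ √(2 * a * b) := Real.sqrt_nonneg _
  set m := √(2 * a * b)
  have hnorm : (b + m) ^ 2 + (a + m) ^ 2 = (a + b + m) ^ 2 := by linear_combination hm2
  have hcs : (R - b) * (b + m) + (a - r) * (a + m) ≤ (a - b) * (a + b + m) := by
    refine le_of_sq_le_sq ?_ (mul_nonneg (sub_nonneg.2 hba) (by positivity))
    calc ((R - b) * (b + m) + (a - r) * (a + m)) ^ 2
        ≤ ((R - b) ^ 2 + (a - r) ^ 2) * ((b + m) ^ 2 + (a + m) ^ 2) := by
          linarith [sq_nonneg ((R - b) * (a + m) - (a - r) * (b + m))]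
      _ ≤ ((a - b) * (a + b + m)) ^ 2 := by
          rw [hnorm, mul_pow]
          gcongr
  linarith

theorem div_le_of_sq_add_sq_le {R₁ R₂ r R : ℝ} (hR₂ : 0 < R₂) (hR₂₁ : R₂ ≤ R₁) (hr : 0 < r)
    (h : (R - R₂) ^ 2 + (R₁ - r) ^ 2 ≤ (R₁ - R₂) ^ 2) :
    R / r ≤ (√(R₁ / R₂) + √2) / (√(R₂ / R₁) + √2) := by
  rw [sqrt_div_add_sqrt_two_div (hR₂.trans_le hR₂₁) hR₂, div_le_div_iff₀ hr (by positivity)]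
  exact mul_add_sqrt_le_of_sq_add_sq_le hR₂.le hR₂₁ h

end Ratio

/-- The ball-sandwich condition of Blaschke's rolling theorem: at each boundary point of `D` a ball
of radius `R₂` inside `D` and a ball of radius `R₁` containing `D` touch the boundary. -/
def BallSandwich {X : Type*} [PseudoMetricSpace X] (R₁ R₂ : ℝ) (D : Set X) : Prop :=
  ∀ p ∈ frontier D, ∃ x₁ x₂ : X,
    dist x₁ p = R₁ ∧ dist x₂ p = R₂ ∧ closedBall x₂ R₂ ⊆ D ∧ D ⊆ closedBall x₁ R₁

namespace BallSandwich

section PseudoMetricSpace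

variable {X : Type*} [PseudoMetricSpace X] {D : Set X} {R₁ R₂ : ℝ}

theorem isBounded (h : BallSandwich R₁ R₂ D) (hfr : (frontier D).Nonempty) :
    Bornology.IsBounded D := by
  obtain ⟨p, hp⟩ := hfr
  obtain ⟨x₁, -, -, -, -, hx₁⟩ := h p hp
  exact isBounded_closedBall.subset hx₁

theorem innerParallelBody_nonempty (h : BallSandwich R₁ R₂ D) (hfr : (frontier D).Nonempty) :
    (innerParallelBody D R₂).Nonempty := by
  obtain ⟨p, hp⟩ := hfr
  obtain ⟨-, x₂, -, -, hx₂, -⟩ := h p hp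
  exact ⟨x₂, hx₂⟩

theorem sub_le_dist (h : BallSandwich R₁ R₂ D) {o : X} {d : ℝ}
    (hd : ∀ x, D ⊆ closedBall x R₁ → dist o x ≤ d) {q : X} (hq : q ∈ frontier D) :
    R₁ - d ≤ dist q o := by
  obtain ⟨x₁, -, hx₁q, -, -, hx₁⟩ := h q hq
  rw [← hx₁q, dist_comm x₁ q]
  linarith [dist_triangle q o x₁, hd x₁ hx₁]

end PseudoMetricSpace

section NormedSpace

variable {E : Type*} [NormedAddCommGroup E] [NormedSpace ℝ E] [Nontrivial E] {D : Set E}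
  {R₁ R₂ : ℝ}

theorem radius_le (h : BallSandwich R₁ R₂ D) (hfr : (frontier D).Nonempty) (hR₂ : 0 ≤ R₂) :
    R₂ ≤ R₁ := by
  obtain ⟨p, hp⟩ := hfr
  obtain ⟨x₁, x₂, -, -, hx₂, hx₁⟩ := h p hp
  exact sub_nonneg.1 (dist_nonneg.trans
    (dist_le_sub_of_closedBall_subset_closedBall hR₂ (hx₂.trans hx₁)))

theorem convex (h : BallSandwich R₁ R₂ D) (hfr : (frontier D).Nonempty) (hD : IsClosed D)
    (hR₂ : 0 < R₂) : Convex ℝ D := by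
  refine convex_of_forall_mem_frontier_exists_convex hD ?_ fun q hq => ?_
  · obtain ⟨x, hx⟩ := h.innerParallelBody_nonempty hfr
    exact ⟨x, mem_interior_iff_mem_nhds.2 (mem_of_superset (closedBall_mem_nhds x hR₂) hx)⟩
  · obtain ⟨x₁, -, hx₁q, -, -, hx₁⟩ := h q hq
    refine ⟨closedBall x₁ R₁, convex_closedBall x₁ R₁, hx₁, ?_⟩
    rw [interior_closedBall', mem_ball', hx₁q]
    exact lt_irrefl R₁

theorem subset_closedBall_add (h : BallSandwich R₁ R₂ D) (hfr : (frontier D).Nonempty) {o : E}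
    {ρ : ℝ} (ho : innerParallelBody D R₂ ⊆ closedBall o ρ) : D ⊆ closedBall o (ρ + R₂) := by
  refine (subset_convexHull_frontier_of_isBounded (h.isBounded hfr)).trans
    (convexHull_min (fun p hp => ?_) (convex_closedBall o _))
  obtain ⟨-, x₂, -, hx₂p, hx₂, -⟩ := h p hp
  have hx₂o : dist x₂ o ≤ ρ := ho hx₂
  rw [mem_closedBall]
  linarith [dist_triangle_left p o x₂]

end NormedSpace

variable {E : Type*} [NormedAddCommGroup E] [InnerProductSpace ℝ E] [CompleteSpace E]
  [Nontrivial E] {D : Set E} {R₁ R₂ : ℝ}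

theorem exists_concentric_closedBalls (h : BallSandwich R₁ R₂ D) (hfr : (frontier D).Nonempty)
    (hD : IsClosed D) (hR₂ : 0 < R₂) :
    ∃ (o : E) (r R : ℝ), R₂ ≤ r ∧ closedBall o r ⊆ D ∧ D ⊆ closedBall o R ∧
      (R - R₂) ^ 2 + (R₁ - r) ^ 2 = (R₁ - R₂) ^ 2 := by
  set C := innerParallelBody D R₂
  set ρ := circumradius C
  have hCD : C ⊆ D := innerParallelBody_subset hR₂.le
  have hCne : C.Nonempty := h.innerParallelBody_nonempty hfr
  obtain ⟨o, ho⟩ := exists_subset_closedBall_circumradius hCne ((h.isBounded hfr).subset hCD)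
  have hoC : o ∈ C := mem_of_subset_closedBall_circumradius hCne (isClosed_innerParallelBody hD)
    (convex_innerParallelBody (h.convex hfr hD hR₂)) ho
  have hcenter {x : E} (hx : D ⊆ closedBall x R₁) : ρ ^ 2 + dist o x ^ 2 ≤ (R₁ - R₂) ^ 2 :=
    sq_circumradius_add_sq_dist_le hCne ho (innerParallelBody_subset_closedBall_sub hR₂.le hx)
  have hρ : ρ ^ 2 ≤ (R₁ - R₂) ^ 2 := by
    obtain ⟨p, hp⟩ := hfr
    obtain ⟨x₁, -, -, -, -, hx₁⟩ := h p hp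
    exact (le_add_of_nonneg_right (sq_nonneg _)).trans (hcenter hx₁)
  set d := √((R₁ - R₂) ^ 2 - ρ ^ 2)
  have hd : d ^ 2 = (R₁ - R₂) ^ 2 - ρ ^ 2 := Real.sq_sqrt (sub_nonneg.2 hρ)
  have hdle : d ≤ R₁ - R₂ :=
    Real.sqrt_le_iff.2 ⟨sub_nonneg.2 (h.radius_le hfr hR₂.le), sub_le_self _ (sq_nonneg ρ)⟩
  have hball : ball o (R₁ - d) ⊆ D :=
    ball_subset_of_forall_frontier_le_dist (hCD hoC) fun q hq => h.sub_le_dist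
      (fun x hx => Real.le_sqrt_of_sq_le (le_sub_iff_add_le'.2 (hcenter hx))) hq
  refine ⟨o, R₁ - d, ρ + R₂, by linarith, ?_, h.subset_closedBall_add hfr ho, by linarith⟩
  rw [← closure_ball o (by linarith)]
  exact closure_minimal hball hD

end BallSandwich

theorem quotient_estimate_euclidean_general {E : Type*} [NormedAddCommGroup E]
    [InnerProductSpace ℝ E] [CompleteSpace E] {D : Set E} (hD : IsClosed D)
    (hfr : (frontier D).Nonempty) {R₁ R₂ : ℝ} (hR₂ : 0 < R₂) (hsand : BallSandwich R₁ R₂ D) :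
    ∃ (o : E) (r R : ℝ), 0 < r ∧ r ≤ R ∧ closedBall o r ⊆ D ∧ D ⊆ closedBall o R ∧
      R / r ≤ (√(R₁ / R₂) + √2) / (√(R₂ / R₁) + √2) := by
  obtain ⟨⟨x, hx⟩, hDne⟩ := nonempty_frontier_iff.1 hfr
  have : Nontrivial E := by
    obtain ⟨y, hy⟩ := (ne_univ_iff_exists_notMem D).1 hDne
    exact ⟨x, y, ne_of_mem_of_not_mem hx hy⟩
  obtain ⟨o, r, R, hr, hin, hout, hradii⟩ := hsand.exists_concentric_closedBalls hfr hD hR₂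
  have hr₀ : 0 < r := hR₂.trans_le hr
  have hrR : r ≤ R := sub_nonneg.1 (dist_nonneg.trans
    (dist_le_sub_of_closedBall_subset_closedBall hr₀.le (hin.trans hout)))
  exact ⟨o, r, R, hr₀, hrR, hin, hout,
    div_le_of_sq_add_sq_le hR₂ (hsand.radius_le hfr hR₂.le) hr₀ hradii.le⟩

/-- Quotient estimate for κ₁,κ₂-convex domains in Euclidean space:
the boundary fits in a spherical shell with ratio of radii at most
(√(R₁/R₂) + √2)/(√(R₂/R₁) + √2). -/
theorem quotient_estimate_euclidean
    {n : ℕ} (hn : 2 ≤ n) (D : Set (EuclideanSpace ℝ (Fin n)))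
    (hDcomp : IsCompact D) (hDconv : Convex ℝ D) (hDint : (interior D).Nonempty)
    (R₁ R₂ : ℝ) (hR₂ : 0 < R₂) (hR₂₁ : R₂ ≤ R₁)
    (hsand : ∀ p ∈ frontier D, ∃ x₁ x₂ : EuclideanSpace ℝ (Fin n),
      dist x₁ p = R₁ ∧ dist x₂ p = R₂ ∧
      Metric.closedBall x₂ R₂ ⊆ D ∧ D ⊆ Metric.closedBall x₁ R₁) :
    ∃ (o : EuclideanSpace ℝ (Fin n)) (r R : ℝ), 0 < r ∧ r ≤ R ∧
      Metric.closedBall o r ⊆ D ∧ D ⊆ Metric.closedBall o R ∧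
      R / r ≤ (Real.sqrt (R₁ / R₂) + Real.sqrt 2) / (Real.sqrt (R₂ / R₁) + Real.sqrt 2) := by
  have : Nonempty (Fin n) := ⟨⟨0, by lia⟩⟩
  have hfr : (frontier D).Nonempty :=
    nonempty_frontier_iff.2 ⟨hDint.mono interior_subset, hDcomp.ne_univ⟩
  exact quotient_estimate_euclidean_general hDcomp.isClosed hfr hR₂ hsand
end

section
/- Let n ≥ 2, let κ > 0 and ε > 0, and let D be a compact convex body in Euclidean space ℝⁿ satisfying the R₁,R₂ ball-sandwich condition with R₁ = 1/κ and R₂ = 1/((1+ε)·κ) (i.e. D is a κ,(1+ε)κ-convex domain). Then there exist a point o ∈ ℝⁿ and reals r, R with 0 ≤ r ≤ R such that Metric.closedBall o r ⊆ D ⊆ Metric.closedBall o R and R − r < (√2 − 1)·ε/κ. -/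
/-!
Let `o` be an incenter of `D` and `r` its inradius, and let `closedBall x R₂ ⊆ D`. Move from `o` a
small fraction `t` of the way towards `x`. The new point `z` still lies in `D`, at distance at most
`r` from some boundary point `q`. The ball of radius `R₁` supporting `D` at `q` has a center `c`
with `dist z c ≥ R₁ - r`, whereas `dist o c ≤ R₁ - r` and `dist x c ≤ R₁ - R₂` because the ball
contains `closedBall o r` and `closedBall x R₂`. Stewart's identity for `c` and the segment from `o`
to `x` then gives, as `t → 0`, `dist x o ^ 2 + (R₁ - r) ^ 2 ≤ (R₁ - R₂) ^ 2`. A point `y` of `D`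
farthest from `o` lies on such a ball `closedBall x R₂`, so that `dist y o - r ≤ dist x o + R₂ - r =
(dist x o + (R₁ - r)) - (R₁ - R₂) ≤ (√2 - 1) (R₁ - R₂)`.
-/

open Metric Filter Set
open scoped Topology

section Distances

theorem dist_lineMap_sq_s5 {V P : Type*} [SeminormedAddCommGroup V] [InnerProductSpace ℝ V]
    [PseudoMetricSpace P] [NormedAddTorsor V P] (a b c : P) (t : ℝ) :
    dist (AffineMap.lineMap a b t) c ^ 2 =
      (1 - t) * dist a c ^ 2 + t * dist b c ^ 2 - t * (1 - t) * dist a b ^ 2 := by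
  have hline : AffineMap.lineMap a b t -ᵥ c = (1 - t) • (a -ᵥ c) + t • (b -ᵥ c) := by
    rw [AffineMap.lineMap_apply, vadd_vsub_assoc, ← vsub_sub_vsub_cancel_right b a c]
    module
  rw [dist_eq_norm_vsub V, dist_eq_norm_vsub V a, dist_eq_norm_vsub V b, dist_eq_norm_vsub V a b,
    hline, ← vsub_sub_vsub_cancel_right a b c, norm_add_sq_real, norm_sub_sq_real,
    real_inner_smul_left, real_inner_smul_right]
  simp only [norm_smul, mul_pow, Real.norm_eq_abs, sq_abs]
  ring

theorem mem_interior_of_isMaxOn_infDist_compl {X : Type*} [PseudoMetricSpace X] {D : Set X}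
    (hint : (interior D).Nonempty) (hcompl : Dᶜ.Nonempty) {o : X}
    (hmax : IsMaxOn (infDist · Dᶜ) D o) : o ∈ interior D := by
  have mem_interior_iff (z : X) : z ∈ interior D ↔ 0 < infDist z Dᶜ := by
    rw [← infDist_pos_iff_notMem_closure hcompl, closure_compl, notMem_compl_iff]
  obtain ⟨w, hw⟩ := hint
  exact (mem_interior_iff o).2 (((mem_interior_iff w).1 hw).trans_le (hmax (interior_subset hw)))

variable {E : Type*} [NormedAddCommGroup E] [NormedSpace ℝ E]

theorem closedBall_infDist_compl_subset {D : Set E} (hD : IsClosed D) {o : E} (ho : o ∈ D) :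
    closedBall o (infDist o Dᶜ) ⊆ D :=
  (closedBall_infDist_compl_subset_closure ho).trans hD.closure_subset

variable [Nontrivial E]

theorem exists_norm_eq_and_sameRay (v : E) {s : ℝ} (hs : 0 ≤ s) :
    ∃ w : E, ‖w‖ = s ∧ SameRay ℝ v w := by
  rcases eq_or_ne v 0 with rfl | hv
  · obtain ⟨w, hw⟩ := exists_norm_eq E hs
    exact ⟨w, hw, .zero_left w⟩
  · refine ⟨(s / ‖v‖) • v, ?_, .sameRay_nonneg_smul_right v (by positivity)⟩
    rw [norm_smul, Real.norm_of_nonneg (by positivity), div_mul_cancel₀ _ (norm_ne_zero_iff.2 hv)]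

theorem dist_add_le_of_closedBall_subset_closedBall {x y : E} {s t : ℝ} (hs : 0 ≤ s)
    (h : closedBall x s ⊆ closedBall y t) : dist x y + s ≤ t := by
  obtain ⟨w, hw, hray⟩ := exists_norm_eq_and_sameRay (x - y) hs
  have hmem : x + w ∈ closedBall y t := h (by simp [hw])
  rwa [mem_closedBall, dist_eq_norm, add_sub_right_comm, hray.norm_add, hw, ← dist_eq_norm] at hmem

theorem mem_frontier_of_isMaxOn_dist {D : Set E} {o y : E} (hy : y ∈ D)
    (hmax : IsMaxOn (dist · o) D y) : y ∈ frontier D := by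
  refine ⟨subset_closure hy, fun hint ↦ ?_⟩
  have hD : D ⊆ closedBall o (dist y o) := fun z hz ↦ hmax hz
  have hball : y ∈ ball o (dist y o) := interior_closedBall' o _ ▸ interior_mono hD hint
  exact lt_irrefl _ (mem_ball.1 hball)

end Distances

section BallConditions

/-- The outer half of the ball-sandwich condition: through every boundary point of `D` passes the
boundary of a ball of radius `R` containing `D`. -/
def OuterBallCondition {X : Type*} [PseudoMetricSpace X] (R : ℝ) (D : Set X) : Prop :=
  ∀ p ∈ frontier D, ∃ c, dist c p = R ∧ D ⊆ closedBall c R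

/-- The inner half of the ball-sandwich condition: through every boundary point of `D` passes the
boundary of a ball of radius `R` contained in `D`. -/
def InnerBallCondition {X : Type*} [PseudoMetricSpace X] (R : ℝ) (D : Set X) : Prop :=
  ∀ p ∈ frontier D, ∃ c, dist c p = R ∧ closedBall c R ⊆ D

theorem OuterBallCondition.exists_le_dist_add_infDist_compl {E : Type*} [NormedAddCommGroup E]
    [NormedSpace ℝ E] [Nontrivial E] {D : Set E} {R : ℝ} (hout : OuterBallCondition R D)
    (hD : IsCompact D) {z : E} (hz : z ∈ D) :
    ∃ c, D ⊆ closedBall c R ∧ R ≤ dist z c + infDist z Dᶜ := by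
  obtain ⟨q, hq, hzq⟩ := hD.exists_mem_frontier_infDist_compl_eq_dist hz
  obtain ⟨c, hcq, hDc⟩ := hout q hq
  refine ⟨c, hDc, ?_⟩
  rw [← hcq, hzq, dist_comm z c]
  exact dist_triangle c z q

variable {E : Type*} [NormedAddCommGroup E] [InnerProductSpace ℝ E] [Nontrivial E]
  {D : Set E} {R₁ R₂ : ℝ} {o x : E}

theorem OuterBallCondition.one_sub_mul_dist_sq_add_sq_le (hout : OuterBallCondition R₁ D)
    (hD : IsCompact D) (ho : o ∈ D) (hmax : IsMaxOn (infDist · Dᶜ) D o)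
    (hR₂ : 0 ≤ R₂) (hx : closedBall x R₂ ⊆ D) {t : ℝ} (ht₀ : 0 < t) (ht₁ : t ≤ 1)
    (hz : AffineMap.lineMap o x t ∈ D) :
    (1 - t) * dist o x ^ 2 + (R₁ - infDist o Dᶜ) ^ 2 ≤ (R₁ - R₂) ^ 2 := by
  set r := infDist o Dᶜ
  set z := AffineMap.lineMap o x t
  have hr : 0 ≤ r := infDist_nonneg
  have hoD : closedBall o r ⊆ D := closedBall_infDist_compl_subset hD.isClosed ho
  obtain ⟨c, hDc, hzc⟩ := hout.exists_le_dist_add_infDist_compl hD hz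
  have hzr : infDist z Dᶜ ≤ r := hmax hz
  have hoc := dist_add_le_of_closedBall_subset_closedBall hr (hoD.trans hDc)
  have hxc := dist_add_le_of_closedBall_subset_closedBall hR₂ (hx.trans hDc)
  have hoc_sq : dist o c ^ 2 ≤ (R₁ - r) ^ 2 := by gcongr; linarith
  have hxc_sq : dist x c ^ 2 ≤ (R₁ - R₂) ^ 2 := by gcongr; linarith
  have hzc_sq : (R₁ - r) ^ 2 ≤ dist z c ^ 2 := by
    have : 0 ≤ R₁ - r := by linarith [dist_nonneg (x := o) (y := c)]
    gcongr
    linarith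
  have hscaled : t * ((1 - t) * dist o x ^ 2 + (R₁ - r) ^ 2) ≤ t * (R₁ - R₂) ^ 2 := by
    linarith [dist_lineMap_sq_s5 o x c t, mul_le_mul_of_nonneg_left hoc_sq (sub_nonneg.2 ht₁),
      mul_le_mul_of_nonneg_left hxc_sq ht₀.le]
  exact le_of_mul_le_mul_left hscaled ht₀

theorem OuterBallCondition.dist_sq_add_sq_le (hout : OuterBallCondition R₁ D)
    (hD : IsCompact D) (ho : o ∈ interior D) (hmax : IsMaxOn (infDist · Dᶜ) D o)
    (hR₂ : 0 ≤ R₂) (hx : closedBall x R₂ ⊆ D) :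
    dist o x ^ 2 + (R₁ - infDist o Dᶜ) ^ 2 ≤ (R₁ - R₂) ^ 2 := by
  have hlim : Tendsto (fun t : ℝ ↦ (1 - t) * dist o x ^ 2 + (R₁ - infDist o Dᶜ) ^ 2) (𝓝[>] 0)
      (𝓝 (dist o x ^ 2 + (R₁ - infDist o Dᶜ) ^ 2)) :=
    (Continuous.tendsto' (by fun_prop) _ _ (by ring)).mono_left nhdsWithin_le_nhds
  have hmem : ∀ᶠ t : ℝ in 𝓝[>] 0, AffineMap.lineMap o x t ∈ D :=
    (AffineMap.lineMap_continuous.tendsto' 0 o (AffineMap.lineMap_apply_zero o x)).mono_left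
      nhdsWithin_le_nhds (mem_interior_iff_mem_nhds.1 ho)
  refine le_of_tendsto hlim ?_
  filter_upwards [hmem, Ioc_mem_nhdsGT zero_lt_one] with t hz ⟨ht₀, ht₁⟩
  exact hout.one_sub_mul_dist_sq_add_sq_le hD (interior_subset ho) hmax hR₂ hx ht₀ ht₁ hz

end BallConditions

theorem add_le_sqrt_two_mul {a b c : ℝ} (hc : 0 ≤ c) (h : a ^ 2 + b ^ 2 ≤ c ^ 2) :
    a + b ≤ √2 * c := by
  refine abs_le_of_sq_le_sq' ?_ (by positivity) |>.2
  rw [mul_pow, Real.sq_sqrt zero_le_two]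
  exact add_sq_le.trans (by gcongr)

theorem one_div_sub_one_div_one_add_mul_lt {κ ε : ℝ} (hκ : 0 < κ) (hε : 0 < ε) :
    1 / κ - 1 / ((1 + ε) * κ) < ε / κ := by
  have heq : 1 / κ - 1 / ((1 + ε) * κ) = ε / κ / (1 + ε) := by
    field_simp
    ring
  rw [heq]
  exact div_lt_self (by positivity) (by linarith)

theorem stability_width_euclidean_general {E : Type*} [NormedAddCommGroup E]
    [InnerProductSpace ℝ E] [Nontrivial E] {D : Set E} {R₁ R₂ : ℝ} (hD : IsCompact D)
    (hint : (interior D).Nonempty) (hout : OuterBallCondition R₁ D)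
    (hin : InnerBallCondition R₂ D) :
    ∃ (o : E) (r R : ℝ), 0 ≤ r ∧ r ≤ R ∧ closedBall o r ⊆ D ∧ D ⊆ closedBall o R ∧
      R - r ≤ (√2 - 1) * (R₁ - R₂) := by
  have hne : D.Nonempty := hint.mono interior_subset
  obtain ⟨o, ho, hmax⟩ := hD.exists_isMaxOn hne (continuous_infDist_pt Dᶜ).continuousOn
  obtain ⟨y, hy, hfar⟩ :=
    hD.exists_isMaxOn hne (f := (dist · o)) (Continuous.continuousOn (by fun_prop))
  have hyD : y ∈ frontier D := mem_frontier_of_isMaxOn_dist hy hfar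
  obtain ⟨x, hxy, hxD⟩ := hin y hyD
  obtain ⟨c, -, hDc⟩ := hout y hyD
  have hR₂ : 0 ≤ R₂ := hxy ▸ dist_nonneg
  have hR : 0 ≤ R₁ - R₂ := by
    linarith [dist_add_le_of_closedBall_subset_closedBall hR₂ (hxD.trans hDc),
      dist_nonneg (x := x) (y := c)]
  have hoD := closedBall_infDist_compl_subset hD.isClosed ho
  have hDo : D ⊆ closedBall o (dist y o) := fun z hz ↦ hfar hz
  have hrR := dist_add_le_of_closedBall_subset_closedBall infDist_nonneg (hoD.trans hDo)
  rw [dist_self, zero_add] at hrR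
  refine ⟨o, infDist o Dᶜ, dist y o, infDist_nonneg, hrR, hoD, hDo, ?_⟩
  have hoint : o ∈ interior D :=
    mem_interior_of_isMaxOn_infDist_compl hint (nonempty_compl.2 hD.ne_univ) hmax
  have hox : dist o x + (R₁ - infDist o Dᶜ) ≤ √2 * (R₁ - R₂) :=
    add_le_sqrt_two_mul hR (hout.dist_sq_add_sq_le hD hoint hmax hR₂ hxD)
  linarith [dist_triangle_left y o x, dist_comm x o]

/-- Stability of almost umbilical hypersurfaces in Euclidean space (width form):
a κ,(1+ε)κ-convex domain fits in a spherical shell of width less than (√2 − 1)·ε/κ. -/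
theorem stability_width_euclidean
    {n : ℕ} (hn : 2 ≤ n) (κ ε : ℝ) (hκ : 0 < κ) (hε : 0 < ε)
    (D : Set (EuclideanSpace ℝ (Fin n)))
    (hDcomp : IsCompact D) (hDconv : Convex ℝ D) (hDint : (interior D).Nonempty)
    (hsand : ∀ p ∈ frontier D, ∃ x₁ x₂ : EuclideanSpace ℝ (Fin n),
      dist x₁ p = 1 / κ ∧ dist x₂ p = 1 / ((1 + ε) * κ) ∧
      Metric.closedBall x₂ (1 / ((1 + ε) * κ)) ⊆ D ∧ D ⊆ Metric.closedBall x₁ (1 / κ)) :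
    ∃ (o : EuclideanSpace ℝ (Fin n)) (r R : ℝ), 0 ≤ r ∧ r ≤ R ∧
      Metric.closedBall o r ⊆ D ∧ D ⊆ Metric.closedBall o R ∧
      R - r < (Real.sqrt 2 - 1) * ε / κ := by
  have : Nonempty (Fin n) := ⟨⟨0, by lia⟩⟩
  have hout : OuterBallCondition (1 / κ) D := fun p hp ↦
    let ⟨x₁, _, h₁, _, _, hDx₁⟩ := hsand p hp
    ⟨x₁, h₁, hDx₁⟩
  have hin : InnerBallCondition (1 / ((1 + ε) * κ)) D := fun p hp ↦
    let ⟨_, x₂, _, h₂, hx₂D, _⟩ := hsand p hp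
    ⟨x₂, h₂, hx₂D⟩
  obtain ⟨o, r, R, hr, hrR, hoD, hDo, hwidth⟩ :=
    stability_width_euclidean_general hDcomp hDint hout hin
  refine ⟨o, r, R, hr, hrR, hoD, hDo, hwidth.trans_lt ?_⟩
  rw [mul_div_assoc]
  exact mul_lt_mul_of_pos_left (one_div_sub_one_div_one_add_mul_lt hκ hε)
    (sub_pos.2 Real.one_lt_sqrt_two)
end

section
/- Let n ≥ 2 and R₁ > 0, and let D be a compact convex body in Euclidean space ℝⁿ such that for every boundary point p ∈ frontier D there exists x with dist x p = R₁ and D ⊆ Metric.closedBall x R₁ (a supporting tangent ball of radius R₁ at every boundary point). Then for any two points A, B ∈ D, every smaller circular arc of radius R₁ joining A and B lies in D; precisely: for every c with dist c A = R₁ and dist c B = R₁, and every point p with dist c p = R₁ for which there exist reals s, t ≥ 0 with p − c = s•(A − c) + t•(B − c), one has p ∈ D. -/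
/-!
A closed set with nonempty interior that has a supporting ball of radius `R₁` at each boundary point
is the intersection of all closed balls of radius `R₁` containing it, so it suffices to show that
such a ball contains the arc. With the center `c` of the arc as origin, a point `a` at distance `R₁`
from `c` lies in the ball with center `v` exactly when `‖v‖² ≤ 2⟪a, v⟫`. A point `s • a + t • b` of
the smaller arc has `1 ≤ s + t` by the triangle inequality, so it inherits this inequality from the
endpoints `a` and `b`.
-/

open Metric

/-- The intersection of all closed balls of radius `R` containing `D`. It is the whole space when
there is no such ball. -/
def closedBallHull {X : Type*} [PseudoMetricSpace X] (R : ℝ) (D : Set X) : Set X :=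
  {p | ∀ x, D ⊆ closedBall x R → p ∈ closedBall x R}

theorem nonempty_inter_frontier_of_isPreconnected {X : Type*} [TopologicalSpace X] {s D : Set X}
    (hs : IsPreconnected s) (hsD : (s ∩ D).Nonempty) (hsDc : (s ∩ Dᶜ).Nonempty) :
    (s ∩ frontier D).Nonempty := by
  rw [← Set.not_disjoint_iff_nonempty_inter]
  intro hs_frontier
  have hs_union : s ⊆ interior D ∪ interior Dᶜ := by
    rwa [← compl_frontier_eq_union_interior, Set.subset_compl_iff_disjoint_right]
  have hs_interior : s ⊆ interior D := by
    obtain ⟨x, hxs, hxD⟩ := hsD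
    have hx : x ∈ interior D :=
      (hs_union hxs).resolve_right fun hx => interior_subset hx hxD
    exact hs.subset_left_of_subset_union isOpen_interior isOpen_interior
      (disjoint_compl_right.mono interior_subset interior_subset) hs_union ⟨x, hxs, hx⟩
  obtain ⟨y, hys, hyD⟩ := hsDc
  exact hyD (interior_subset (hs_interior hys))

theorem closedBallHull_subset_of_supporting_closedBall {E : Type*} [NormedAddCommGroup E]
    [NormedSpace ℝ E] {D : Set E} {R : ℝ} (hD : IsClosed D) (hDint : (interior D).Nonempty)
    (hsupp : ∀ q ∈ frontier D, ∃ x, dist x q = R ∧ D ⊆ closedBall x R) :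
    closedBallHull R D ⊆ D := by
  intro p hp
  by_contra hpD
  obtain ⟨o, ho⟩ := hDint
  obtain ⟨q, hq_segment, hq⟩ : (segment ℝ o p ∩ frontier D).Nonempty :=
    nonempty_inter_frontier_of_isPreconnected (convex_segment o p).isPreconnected
      ⟨o, left_mem_segment ℝ o p, interior_subset ho⟩ ⟨p, right_mem_segment ℝ o p, hpD⟩
  obtain ⟨x, hxq, hDx⟩ := hsupp q hq
  have hoq : o ≠ q := fun h => hq.2 (h ▸ ho)
  have hpq : p ≠ q := fun h => hpD (h ▸ hD.frontier_subset hq)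
  have hq_interior : q ∈ interior (closedBall x R) :=
    (convex_closedBall x R).openSegment_interior_self_subset_interior (interior_mono hDx ho)
      (hp x hDx) (mem_openSegment_of_ne_left_right hoq hpq hq_segment)
  have : Nontrivial E := ⟨o, q, hoq⟩
  rw [interior_closedBall', mem_ball'] at hq_interior
  exact hq_interior.ne hxq

section Seminormed

variable {E : Type*} [SeminormedAddCommGroup E] {s t : ℝ}

theorem one_le_add_of_le_norm_smul_add_smul [NormedSpace ℝ E] {a b : E} {R : ℝ} (hR : 0 < R)
    (hs : 0 ≤ s) (ht : 0 ≤ t) (ha : ‖a‖ ≤ R) (hb : ‖b‖ ≤ R) (hab : R ≤ ‖s • a + t • b‖) :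
    1 ≤ s + t := by
  refine le_of_mul_le_mul_right ?_ hR
  calc 1 * R ≤ ‖s • a + t • b‖ := (one_mul R).trans_le hab
    _ ≤ ‖s • a‖ + ‖t • b‖ := norm_add_le _ _
    _ = s * ‖a‖ + t * ‖b‖ := by rw [norm_smul_of_nonneg hs, norm_smul_of_nonneg ht]
    _ ≤ s * R + t * R := by gcongr
    _ = (s + t) * R := (add_mul _ _ _).symm

variable [InnerProductSpace ℝ E] {a b v : E}

theorem norm_sub_le_norm_iff_norm_sq_le_two_mul_inner :
    ‖a - v‖ ≤ ‖a‖ ↔ ‖v‖ ^ 2 ≤ 2 * inner ℝ a v := by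
  rw [← sq_le_sq₀ (norm_nonneg _) (norm_nonneg _), norm_sub_sq_real]
  constructor <;> intro h <;> linarith

theorem norm_smul_add_smul_sub_le_norm (hs : 0 ≤ s) (ht : 0 ≤ t)
    (hst : 1 ≤ s + t) (ha : ‖a - v‖ ≤ ‖a‖) (hb : ‖b - v‖ ≤ ‖b‖) :
    ‖s • a + t • b - v‖ ≤ ‖s • a + t • b‖ := by
  rw [norm_sub_le_norm_iff_norm_sq_le_two_mul_inner] at ha hb ⊢
  calc ‖v‖ ^ 2 ≤ (s + t) * ‖v‖ ^ 2 := le_mul_of_one_le_left (sq_nonneg _) hst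
    _ = s * ‖v‖ ^ 2 + t * ‖v‖ ^ 2 := add_mul _ _ _
    _ ≤ s * (2 * inner ℝ a v) + t * (2 * inner ℝ b v) := by gcongr
    _ = 2 * inner ℝ (s • a + t • b) v := by
      rw [inner_add_left, real_inner_smul_left, real_inner_smul_left]
      ring

end Seminormed

section InnerProductSpace

variable {E : Type*} [NormedAddCommGroup E] [InnerProductSpace ℝ E] {R s t : ℝ} {A B c p : E}

theorem mem_closedBall_of_mem_smaller_arc {x : E} (hA : A ∈ closedBall x R)
    (hB : B ∈ closedBall x R) (hcA : dist c A = R) (hcB : dist c B = R) (hcp : dist c p = R)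
    (hs : 0 ≤ s) (ht : 0 ≤ t) (hp : p - c = s • (A - c) + t • (B - c)) :
    p ∈ closedBall x R := by
  obtain rfl | hR := (dist_nonneg.trans_eq hcA).eq_or_lt
  · rwa [← dist_eq_zero.mp hcp, dist_eq_zero.mp hcA]
  rw [dist_comm, dist_eq_norm] at hcA hcB hcp
  have hst : 1 ≤ s + t :=
    one_le_add_of_le_norm_smul_add_smul hR hs ht hcA.le hcB.le (hp ▸ hcp.ge)
  have mem_iff {y : E} (hy : ‖y - c‖ = R) :
      y ∈ closedBall x R ↔ ‖y - c - (x - c)‖ ≤ ‖y - c‖ := by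
    rw [sub_sub_sub_cancel_right, hy, mem_closedBall_iff_norm]
  rw [mem_iff hcA] at hA
  rw [mem_iff hcB] at hB
  rw [mem_iff hcp, hp]
  exact norm_smul_add_smul_sub_le_norm hs ht hst hA hB

theorem arc_lemma_euclidean_general {D : Set E} (hD : IsClosed D) (hDint : (interior D).Nonempty)
    (hsupp : ∀ q ∈ frontier D, ∃ x, dist x q = R ∧ D ⊆ closedBall x R)
    (hA : A ∈ D) (hB : B ∈ D) (hcA : dist c A = R) (hcB : dist c B = R) (hcp : dist c p = R)
    (hs : 0 ≤ s) (ht : 0 ≤ t) (hp : p - c = s • (A - c) + t • (B - c)) :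
    p ∈ D :=
  closedBallHull_subset_of_supporting_closedBall hD hDint hsupp fun _ hDx =>
    mem_closedBall_of_mem_smaller_arc (hDx hA) (hDx hB) hcA hcB hcp hs ht hp

end InnerProductSpace

/-- Lemma: in a κ₁-convex Euclidean domain (supporting tangent ball of radius R₁ = 1/κ₁
at every boundary point), every smaller circular arc of radius R₁ joining two points
of the domain lies in the domain. -/
theorem arc_lemma_euclidean
    {n : ℕ} (hn : 2 ≤ n) (R₁ : ℝ) (hR₁ : 0 < R₁)
    (D : Set (EuclideanSpace ℝ (Fin n)))
    (hDcomp : IsCompact D) (hDconv : Convex ℝ D) (hDint : (interior D).Nonempty)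
    (hsupp : ∀ p ∈ frontier D, ∃ x : EuclideanSpace ℝ (Fin n),
      dist x p = R₁ ∧ D ⊆ Metric.closedBall x R₁) :
    ∀ A ∈ D, ∀ B ∈ D, ∀ c : EuclideanSpace ℝ (Fin n),
      dist c A = R₁ → dist c B = R₁ →
      ∀ p : EuclideanSpace ℝ (Fin n), dist c p = R₁ →
      (∃ s t : ℝ, 0 ≤ s ∧ 0 ≤ t ∧ p - c = s • (A - c) + t • (B - c)) →
      p ∈ D :=
  fun _ hA _ hB _ hcA hcB _ hcp ⟨_, _, hs, ht, hp⟩ =>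
    arc_lemma_euclidean_general hDcomp.isClosed hDint hsupp hA hB hcA hcB hcp hs ht hp
end
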